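/- Let μ ∈ π_n be an (r−1)-slim partition, let g be a symmetric polynomial in ℂ[x_1,…,x_n] with highest partition μ, and assume n > k. Then for any nonzero complex number c there exist s_1, …, s_{k+1} ∈ {0, 1, …, r−2} such that the polynomial g(c q^{s_1}, c t q^{s_2}, c t² q^{s_3}, …, c t^k q^{s_{k+1}}, x_{k+2}, …, x_n) in the remaining variables x_{k+2},…,x_n is not identically zero. -/

import Mathlib

open MvPolynomial

/-- `l` is an `(r-1)`-slim partition of length at most `n`:
consecutive differences are `< r-1` and the last part is `< r-1`. -/
def IsSlim (r n : ℕ) (l : Fin n → ℕ) : Prop :=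
  (∀ i : Fin n, ∀ h : (i : ℕ) + 1 < n, l i - l ⟨(i : ℕ) + 1, h⟩ < r - 1) ∧
  (∀ i : Fin n, (i : ℕ) = n - 1 → l i < r - 1)

/-- The monomial symmetric polynomial `m_λ`: the sum of the distinct monomials obtained
from `x^λ` by permuting the variables. -/
noncomputable def msym (n : ℕ) (l : Fin n → ℕ) : MvPolynomial (Fin n) ℂ :=
  ∑ a ∈ Finset.image (fun w : Equiv.Perm (Fin n) => l ∘ w) Finset.univ,
    MvPolynomial.monomial (Finsupp.equivFunOnFinite.symm a) (1 : ℂ)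

/-- Strict dominance order on partitions of equal weight:
`a < b` iff `a ≠ b`, `|a| = |b|` and all partial sums of `a` are at most those of `b`. -/
def DomLT (n : ℕ) (a b : Fin n → ℕ) : Prop :=
  a ≠ b ∧ (∑ i, a i = ∑ i, b i) ∧
  ∀ i : Fin n, ∑ j ∈ Finset.univ.filter (· ≤ i), a j
    ≤ ∑ j ∈ Finset.univ.filter (· ≤ i), b j

/-- `g` is a symmetric polynomial with highest partition `μ`:
`g = c_μ m_μ + Σ_{ν < μ} c_ν m_ν` with `c_μ ≠ 0` (`<` the dominance order). -/
def HighestPartition (n : ℕ) (g : MvPolynomial (Fin n) ℂ) (μ : Fin n → ℕ) : Prop :=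
  ∃ (S : Finset (Fin n → ℕ)) (coef : (Fin n → ℕ) → ℂ),
    μ ∈ S ∧ coef μ ≠ 0 ∧
    (∀ ν ∈ S, Antitone ν ∧ (ν = μ ∨ DomLT n ν μ)) ∧
    g = ∑ ν ∈ S, coef ν • msym n ν


lemma eval_msym_comp (n : ℕ) (l : Fin n → ℕ) (x : Fin n → ℂ) (σ : Equiv.Perm (Fin n)) :
    eval (x ∘ σ) (msym n l) = eval x (msym n l) := by
  classical
  unfold msym
  simp only [map_sum, eval_monomial, one_mul]
  refine Finset.sum_nbij' (fun a => a ∘ σ.symm) (fun a => a ∘ σ) ?_ ?_ ?_ ?_ ?_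
  · intro a ha
    simp only [Finset.mem_image, Finset.mem_univ, true_and] at ha ⊢
    obtain ⟨w, rfl⟩ := ha
    exact ⟨w * σ.symm, by ext; simp⟩
  · intro a ha
    simp only [Finset.mem_image, Finset.mem_univ, true_and] at ha ⊢
    obtain ⟨w, rfl⟩ := ha
    exact ⟨w * σ, by ext; simp⟩
  · intro a _; ext; simp
  · intro a _; ext; simp
  · intro a _
    rw [Finsupp.prod_fintype _ _ (by simp), Finsupp.prod_fintype _ _ (by simp)]
    refine Eq.trans ?_ (Equiv.prod_comp σ _)
    simp

lemma eval_comp_of_highest {n : ℕ} {g : MvPolynomial (Fin n) ℂ} {μ : Fin n → ℕ}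
    (hg : HighestPartition n g μ) (x : Fin n → ℂ) (σ : Equiv.Perm (Fin n)) :
    eval (x ∘ σ) g = eval x g := by
  obtain ⟨S, coef, -, -, -, rfl⟩ := hg
  simp only [map_sum, smul_eval, eval_msym_comp]

lemma coeff_msym (n : ℕ) (l : Fin n → ℕ) (e : Fin n →₀ ℕ) [Decidable (∃ w : Equiv.Perm (Fin n), l ∘ w = e)] :
    coeff e (msym n l) = if (∃ w : Equiv.Perm (Fin n), l ∘ w = e) then 1 else 0 := by
  classical
  unfold msym
  simp only [coeff_sum, coeff_monomial]
  have : ∀ a : Fin n → ℕ, (Finsupp.equivFunOnFinite.symm a = e) ↔ a = e := by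
    intro a
    rw [Equiv.symm_apply_eq]
    rfl
  simp only [this]
  rw [Finset.sum_ite_eq']
  simp

lemma antitone_perm_eq {n : ℕ} {a b : Fin n → ℕ} (ha : Antitone a) (hb : Antitone b)
    (w v : Equiv.Perm (Fin n)) (h : a ∘ w = b ∘ v) : a = b := by
  have hp : (List.ofFn a).Perm (List.ofFn b) := by
    have h1 : (List.ofFn (a ∘ w)).Perm (List.ofFn a) := Equiv.Perm.ofFn_comp_perm w a
    have h2 : (List.ofFn (b ∘ v)).Perm (List.ofFn b) := Equiv.Perm.ofFn_comp_perm v b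
    exact h1.symm.trans ((by rw [h] : (List.ofFn (a ∘ w)).Perm (List.ofFn (b ∘ v))).trans h2)
  have := hp.eq_of_pairwise' ha.sortedGE_ofFn.pairwise hb.sortedGE_ofFn.pairwise
  exact List.ofFn_injective this

/-- Weighted dominance. -/
lemma weighted_dom {n : ℕ} {ν μ : Fin n → ℕ} (h : ν = μ ∨ DomLT n ν μ) :
    ∑ j, (Fin.rev j : ℕ) * ν j ≤ ∑ j, (Fin.rev j : ℕ) * μ j := by
  rcases h with rfl | ⟨-, hs, hd⟩
  · rfl
  have key : ∀ a : Fin n → ℕ, ∑ i, ∑ j ∈ Finset.univ.filter (· ≤ i), a j =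
      ∑ j, (Fin.rev j : ℕ) * a j + ∑ j, a j := by
    intro a
    simp only [Finset.sum_filter]
    rw [Finset.sum_comm, ← Finset.sum_add_distrib]
    refine Finset.sum_congr rfl fun j _ => ?_
    rw [← Finset.sum_filter, Finset.sum_const, smul_eq_mul]
    have : (Finset.univ.filter (fun i => j ≤ i)) = Finset.Ici j := by ext; simp
    rw [this, Fin.card_Ici, Fin.val_rev]
    have := j.2
    obtain ⟨c, hc⟩ : ∃ c, n = j + 1 + c := ⟨n - (j+1), by omega⟩
    rw [show n - (j : ℕ) = c + 1 by omega, show n - ((j : ℕ) + 1) = c by omega]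
    ring
  have := Finset.sum_le_sum (fun i (_ : i ∈ Finset.univ) => hd i)
  rw [key, key] at this
  omega

lemma support_bound {n : ℕ} {g : MvPolynomial (Fin n) ℂ} {μ : Fin n → ℕ}
    (hg : HighestPartition n g μ) (e : Fin n →₀ ℕ) (he : coeff e g ≠ 0) :
    (∑ i, e i = ∑ i, μ i) ∧
    ∀ τ : Equiv.Perm (Fin n), ∑ j, (τ j : ℕ) * e j ≤ ∑ j, (Fin.rev j : ℕ) * μ j := by
  classical
  obtain ⟨S, coef, -, -, hS, rfl⟩ := hg
  simp only [coeff_sum, coeff_smul, coeff_msym] at he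
  obtain ⟨ν, hν, hne⟩ := Finset.exists_ne_zero_of_sum_ne_zero he
  have hw : ∃ w : Equiv.Perm (Fin n), ν ∘ w = e := by
    by_contra h
    simp [h] at hne
  obtain ⟨w, hw⟩ := hw
  obtain ⟨hνa, hd⟩ := hS ν hν
  constructor
  · rw [← hw]
    have : ∑ i, (ν ∘ w) i = ∑ i, ν i := Equiv.sum_comp w ν
    rw [this]
    rcases hd with rfl | hd
    · rfl
    · exact hd.2.1
  · intro τ
    refine le_trans ?_ (weighted_dom hd)
    rw [← hw]
    have hm : Monovary (fun j : Fin n => ((Fin.rev j : Fin n) : ℕ)) ν := by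
      refine Antitone.monovary ?_ hνa
      intro a b hab
      exact Fin.rev_le_rev.2 hab
    have := hm.sum_comp_perm_mul_le_sum_mul (σ := (Fin.revPerm * (τ * w⁻¹)))
    refine le_trans (le_of_eq ?_) this
    refine Eq.trans ?_ (Equiv.sum_comp w _)
    simp

lemma coeff_top {n : ℕ} {g : MvPolynomial (Fin n) ℂ} {μ : Fin n → ℕ} (hμ : Antitone μ)
    (hg : HighestPartition n g μ) (w : Equiv.Perm (Fin n)) :
    coeff (Finsupp.equivFunOnFinite.symm (μ ∘ w)) g ≠ 0 := by
  classical
  obtain ⟨S, coef, hμS, hc, hS, rfl⟩ := hg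
  simp only [coeff_sum, coeff_smul, coeff_msym]
  rw [Finset.sum_eq_single_of_mem μ hμS]
  · rw [if_pos ⟨w, by ext; simp⟩]
    simpa using hc
  · intro ν hν hne
    rw [if_neg]
    · simp
    · rintro ⟨v, hv⟩
      refine hne (antitone_perm_eq (hS ν hν).1 hμ v w ?_)
      rw [hv]; ext; simp

lemma coeff_extract {m d : ℕ} (g : MvPolynomial (Fin (m + d)) ℂ) (u : Fin m → ℂ)
    (h : ∀ y : Fin d → ℂ, eval (Fin.append u y) g = 0) (b : Fin d → ℕ) :
    ∑ e ∈ g.support with (∀ i, e (Fin.natAdd m i) = b i),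
      coeff e g * ∏ j, u j ^ e (Fin.castAdd d j) = 0 := by
  classical
  have hQ : aeval (Fin.append (fun j => (C (u j) : MvPolynomial (Fin d) ℂ)) X) g = 0 := by
    apply MvPolynomial.funext
    intro y
    rw [map_zero, ← h y, ← coe_aeval_eq_eval, RingHom.coe_coe, ← coe_aeval_eq_eval, RingHom.coe_coe,
      ← AlgHom.comp_apply]
    congr 1
    apply MvPolynomial.algHom_ext
    intro i
    refine Fin.addCases (fun i => ?_) (fun i => ?_) i <;> simp [aeval_eq_eval]
  have := congrArg (coeff (Finsupp.equivFunOnFinite.symm b)) hQ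
  rw [aeval_def, eval₂_eq', coeff_sum, coeff_zero] at this
  rw [← this, Finset.sum_filter]
  refine Finset.sum_congr rfl fun e _ => ?_
  rw [Fin.prod_univ_add]
  simp only [Fin.append_left, Fin.append_right, ← C_pow]
  rw [← map_prod, algebraMap_eq, ← mul_assoc, ← C_mul, coeff_C_mul]
  have : (∏ i : Fin d, (X i : MvPolynomial (Fin d) ℂ) ^ e (Fin.natAdd m i)) =
      monomial (Finsupp.equivFunOnFinite.symm fun i => e (Fin.natAdd m i)) 1 := by
    rw [monomial_eq, Finsupp.prod_fintype _ _ (by simp)]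
    simp
  rw [this, coeff_monomial]
  simp only [EmbeddingLike.apply_eq_iff_eq, funext_iff]
  split_ifs <;> simp

/-- A nonnegative vector with entries distinct mod `m` and minimal sum is a permutation. -/
lemma perm_of_distinct {m : ℕ} (p : Fin m → ℕ) (hsum : ∑ j, p j = ∑ j : Fin m, (j : ℕ))
    (hinj : ∀ i j, p i % m = p j % m → i = j) :
    ∃ π : Equiv.Perm (Fin m), ∀ j, (π j : ℕ) = p j := by
  let f : Fin m → Fin m := fun j => ⟨p j % m, Nat.mod_lt _ j.pos⟩
  have hf : Function.Injective f := fun i j h => hinj i j (by simpa [f] using h)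
  let π : Equiv.Perm (Fin m) := Equiv.ofBijective f (Finite.injective_iff_bijective.1 hf)
  refine ⟨π, fun j => ?_⟩
  have h1 : ∑ j, (π j : ℕ) = ∑ j, p j := by
    rw [hsum]; exact Equiv.sum_comp π (fun j : Fin m => (j : ℕ))
  have h2 : ∀ j ∈ Finset.univ, (π j : ℕ) ≤ p j := fun j _ => Nat.mod_le _ _
  exact (Finset.sum_eq_sum_iff_of_le h2).1 h1 j (Finset.mem_univ _)

lemma perm_eq_id {m : ℕ} (π : Equiv.Perm (Fin m)) (z : Fin m → ℤ) (hz : StrictMono z)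
    (h : ∑ j : Fin m, ((j : ℕ) : ℤ) * z j ≤ ∑ j, ((π j : ℕ) : ℤ) * z j) : π = 1 := by
  have hm : Monovary (fun j : Fin m => ((j : ℕ) : ℤ)) z := by
    refine Monotone.monovary ?_ hz.monotone
    intro a b hab
    simpa using hab
  have h2 := hm.sum_comp_perm_mul_le_sum_mul (σ := π)
  have h3 := (hm.sum_comp_perm_mul_eq_sum_mul_iff (σ := π)).1 (le_antisymm h2 h)
  have h4 : Monotone π := by
    intro a b hab
    rcases hab.eq_or_lt with rfl | hab
    · rfl
    · have := h3 (hz hab)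
      simpa using this
  have h5 : StrictMono π := h4.strictMono_of_injective π.injective
  ext j
  have := congrArg (fun f : Fin m ≃o Fin m => f j)
    (Subsingleton.elim (h5.orderIsoOfSurjective π π.surjective) (OrderIso.refl _))
  simpa using congrArg Fin.val this

/-- The combinatorial core: only the exponent `E = μ ∘ rev` survives. -/
lemma comb_core {m d N : ℕ} (hN : 0 < N) {g : MvPolynomial (Fin (m + d)) ℂ}
    {μ : Fin (m + d) → ℕ} (hg : HighestPartition (m + d) g μ)
    (z : Fin m → ℤ) (hz : StrictMono z)
    (hzdef : ∀ j : Fin m, z j = N * ((j : ℕ) : ℤ) - μ (Fin.rev (Fin.castAdd d j)))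
    (hzlow : ∀ j, -(N : ℤ) < z j)
    (e : Fin (m + d) →₀ ℕ) (he : coeff e g ≠ 0)
    (heE : ∀ i : Fin d, e (Fin.natAdd m i) = μ (Fin.rev (Fin.natAdd m i)))
    (p : Fin m → ℤ) (hp : ∀ j, N * p j = e (Fin.castAdd d j) + z j)
    (hinj : ∀ i j, p i ≡ p j [ZMOD m] → i = j) :
    ∀ j : Fin (m + d), e j = μ (Fin.rev j) := by
  have hN' : (0 : ℤ) < N := by exact_mod_cast hN
  obtain ⟨hsum, hτ⟩ := support_bound hg e he
  have hp0 : ∀ j, 0 ≤ p j := by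
    intro j
    by_contra hneg
    have h1 : p j ≤ -1 := by omega
    have h2 := hp j
    have h3 := hzlow j
    have h4 : (0 : ℤ) ≤ e (Fin.castAdd d j) := by positivity
    nlinarith
  lift p to Fin m → ℕ using hp0
  beta_reduce at hp hinj
  have hrev : ∑ i, μ i = ∑ i, μ (Fin.rev i) := (Equiv.sum_comp Fin.revPerm μ).symm
  rw [hrev, Fin.sum_univ_add, Fin.sum_univ_add, Finset.sum_congr rfl (fun i _ => heE i)] at hsum
  have hsum' := Nat.add_right_cancel hsum
  have hps : ∑ j, p j = ∑ j : Fin m, (j : ℕ) := by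
    have h1 : (N : ℤ) * ∑ j, (p j : ℤ) = N * ∑ j : Fin m, ((j : ℕ) : ℤ) := by
      rw [Finset.mul_sum, Finset.sum_congr rfl (fun j _ => hp j)]
      simp only [hzdef]
      rw [Finset.sum_add_distrib, Finset.sum_sub_distrib, Finset.mul_sum]
      have : (∑ i : Fin m, (e (Fin.castAdd d i) : ℤ)) =
          ∑ i : Fin m, (μ (Fin.rev (Fin.castAdd d i)) : ℤ) := by exact_mod_cast hsum'
      rw [this]; ring
    have h2 := mul_left_cancel₀ hN'.ne' h1
    exact_mod_cast h2
  obtain ⟨π, hπ⟩ := perm_of_distinct p hps (by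
    intro i j hij
    apply hinj
    have : p i ≡ p j [MOD m] := hij
    exact (Int.natCast_modEq_iff).2 this)
  have hπ1 : π = 1 := by
    refine perm_eq_id π z hz ?_
    have h1 := hτ (finSumFinEquiv.permCongr (Equiv.sumCongr π (Equiv.refl (Fin d))))
    have hrev2 : ∑ j, (Fin.rev j : ℕ) * μ j = ∑ j : Fin (m + d), (j : ℕ) * μ (Fin.rev j) := by
      refine ((Equiv.sum_comp Fin.revPerm _).symm).trans ?_
      simp
    rw [hrev2, Fin.sum_univ_add, Fin.sum_univ_add] at h1
    simp only [Equiv.permCongr_apply, finSumFinEquiv_symm_apply_castAdd,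
      finSumFinEquiv_symm_apply_natAdd, Equiv.sumCongr_apply, Sum.map_inl, Sum.map_inr,
      finSumFinEquiv_apply_left, finSumFinEquiv_apply_right, Equiv.refl_apply, heE,
      Fin.val_castAdd] at h1
    have h2 := Nat.le_of_add_le_add_right h1
    have h3 : ∑ j : Fin m, ((π j : ℕ) : ℤ) * (e (Fin.castAdd d j) : ℤ) ≤
        ∑ j : Fin m, ((j : ℕ) : ℤ) * (μ (Fin.rev (Fin.castAdd d j)) : ℤ) := by exact_mod_cast h2
    have h4 : ∑ j : Fin m, ((π j : ℕ) : ℤ) * (e (Fin.castAdd d j) : ℤ) =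
        N * ∑ j : Fin m, ((j : ℕ) : ℤ) ^ 2 - ∑ j, ((π j : ℕ) : ℤ) * z j := by
      rw [← Equiv.sum_comp π (fun j : Fin m => ((j : ℕ) : ℤ) ^ 2), Finset.mul_sum,
        ← Finset.sum_sub_distrib]
      refine Finset.sum_congr rfl fun j _ => ?_
      have := hp j
      rw [← hπ] at this
      linear_combination (-((π j : ℕ) : ℤ)) * this
    have h5 : ∑ j : Fin m, ((j : ℕ) : ℤ) * (μ (Fin.rev (Fin.castAdd d j)) : ℤ) =
        N * ∑ j : Fin m, ((j : ℕ) : ℤ) ^ 2 - ∑ j : Fin m, ((j : ℕ) : ℤ) * z j := by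
      rw [Finset.mul_sum, ← Finset.sum_sub_distrib]
      refine Finset.sum_congr rfl fun j _ => ?_
      rw [hzdef j]; ring
    linarith
  intro j
  refine Fin.addCases (fun j => ?_) (fun j => heE j) j
  have h1 := hp j
  rw [← hπ, hπ1, hzdef] at h1
  have : (e (Fin.castAdd d j) : ℤ) = μ (Fin.rev (Fin.castAdd d j)) := by
    simp only [Equiv.Perm.coe_one, id] at h1
    linarith
  exact_mod_cast this

/-- The matrix attached to the exponent `e`. -/
noncomputable def wheelMat {m : ℕ} (N : ℕ) (t q c : ℂ) (z : Fin m → ℤ) (E e : Fin m → ℕ) :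
    Matrix (Fin m) (Fin m) ℂ :=
  Matrix.of fun i j => ∑ s : Fin N, ((t ^ (i : ℕ)) ^ z j * ((q ^ (s : ℕ)) ^ E j)⁻¹) *
    (c * t ^ (i : ℕ) * q ^ (s : ℕ)) ^ e j

lemma wheel_entry {m N : ℕ} {t q c : ℂ} (ht0 : t ≠ 0) (hq0 : q ≠ 0) (z : Fin m → ℤ)
    (E e : Fin m → ℕ) (i j : Fin m) :
    wheelMat N t q c z E e i j = c ^ e j * (t ^ (i : ℕ)) ^ ((e j : ℤ) + z j) *
      ∑ s ∈ Finset.range N, (q ^ ((e j : ℤ) - E j)) ^ s := by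
  rw [wheelMat, Matrix.of_apply, Finset.mul_sum, ← Fin.sum_univ_eq_sum_range
    (fun s => c ^ e j * (t ^ (i : ℕ)) ^ ((e j : ℤ) + z j) * (q ^ ((e j : ℤ) - E j)) ^ s)]
  refine Finset.sum_congr rfl fun s _ => ?_
  have h1 : (q ^ ((e j : ℤ) - E j)) ^ (s : ℕ) = (q ^ (s : ℕ)) ^ e j * ((q ^ (s : ℕ)) ^ E j)⁻¹ := by
    rw [zpow_sub₀ hq0, zpow_natCast, zpow_natCast, div_eq_mul_inv, mul_pow, inv_pow,
      ← pow_mul, ← pow_mul, ← pow_mul, ← pow_mul, mul_comm (e j), mul_comm (E j)]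
  rw [h1, zpow_add₀ (pow_ne_zero _ ht0), zpow_natCast, mul_pow, mul_pow]
  ring

lemma wheel_det_zero_of_not_dvd {m N : ℕ} {t q c : ℂ} (ht0 : t ≠ 0) (hq : IsPrimitiveRoot q N)
    (hN : 0 < N) (z : Fin m → ℤ) (E e : Fin m → ℕ) (j : Fin m) (h : ¬ (N : ℤ) ∣ (e j : ℤ) - E j) :
    (wheelMat N t q c z E e).det = 0 := by
  refine Matrix.det_eq_zero_of_column_eq_zero j fun i => ?_
  rw [wheel_entry ht0 (hq.ne_zero hN.ne')]
  have h1 : q ^ ((e j : ℤ) - E j) ≠ 1 := fun h' => h ((hq.zpow_eq_one_iff_dvd _).1 h')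
  rw [geom_sum_eq h1]
  have : (q ^ ((e j : ℤ) - E j)) ^ N = 1 := by
    rw [← zpow_natCast, ← zpow_mul, mul_comm, zpow_mul, zpow_natCast, hq.pow_eq_one, one_zpow]
  simp [this]

lemma wheel_det {m N : ℕ} {t q c : ℂ} (ht0 : t ≠ 0) (hq : IsPrimitiveRoot q N)
    (hN : 0 < N) (z : Fin m → ℤ) (E e : Fin m → ℕ) (h : ∀ j, (N : ℤ) ∣ (e j : ℤ) - E j)
    (p : Fin m → ℤ) (hp : ∀ j, N * p j = e j + z j) :
    (wheelMat N t q c z E e).det = (∏ j, (c ^ e j * N)) *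
      (Matrix.of fun i j : Fin m => ((t ^ N) ^ (i : ℕ)) ^ p j).det := by
  rw [← Matrix.det_mul_row]
  congr 1
  ext i j
  rw [wheel_entry ht0 (hq.ne_zero hN.ne'), (hq.zpow_eq_one_iff_dvd _).2 (h j), ← hp j]
  simp only [one_pow, Finset.sum_const, Finset.card_range, nsmul_eq_mul, mul_one, Matrix.of_apply]
  rw [zpow_mul, zpow_natCast, ← pow_mul, ← pow_mul, mul_comm (i : ℕ)]
  ring

lemma wheel_total {m d : ℕ} (N : ℕ) (t q c : ℂ) (z : Fin m → ℤ) (E : Fin m → ℕ)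
    (g : MvPolynomial (Fin (m + d)) ℂ) (b : Fin d → ℕ)
    (h : ∀ (σ : Equiv.Perm (Fin m)) (s : Fin m → Fin N) (y : Fin d → ℂ),
      eval (Fin.append (fun j => c * t ^ (σ j : ℕ) * q ^ (s j : ℕ)) y) g = 0) :
    ∑ e ∈ g.support with (∀ i, e (Fin.natAdd m i) = b i),
      coeff e g * (wheelMat N t q c z E (fun j => e (Fin.castAdd d j))).det = 0 := by
  classical
  have h1 : ∀ e : Fin m → ℕ, (wheelMat N t q c z E e).det =
      ∑ σ : Equiv.Perm (Fin m), ∑ s : Fin m → Fin N,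
        (((Equiv.Perm.sign σ : ℤ) : ℂ) *
          ∏ j, ((t ^ (σ j : ℕ)) ^ z j * ((q ^ (s j : ℕ)) ^ E j)⁻¹)) *
          ∏ j, (c * t ^ (σ j : ℕ) * q ^ (s j : ℕ)) ^ e j := by
    intro e
    rw [Matrix.det_apply']
    refine Finset.sum_congr rfl fun σ _ => ?_
    simp only [wheelMat, Matrix.of_apply]
    rw [Finset.prod_univ_sum, Fintype.piFinset_univ, Finset.mul_sum]
    refine Finset.sum_congr rfl fun s _ => ?_
    rw [Finset.prod_mul_distrib, mul_assoc]
  simp only [h1, Finset.mul_sum]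
  rw [Finset.sum_comm]
  refine Finset.sum_eq_zero fun σ _ => ?_
  rw [Finset.sum_comm]
  refine Finset.sum_eq_zero fun s _ => ?_
  have h2 := coeff_extract g _ (h σ s) b
  have h3 := congrArg (fun x => (((Equiv.Perm.sign σ : ℤ) : ℂ) *
          ∏ j, ((t ^ (σ j : ℕ)) ^ z j * ((q ^ (s j : ℕ)) ^ E j)⁻¹)) * x) h2
  simp only [mul_zero, Finset.mul_sum] at h3
  rw [← h3]
  refine Finset.sum_congr rfl fun e _ => ?_
  ring

theorem wheel_core (k r d : ℕ) (hr : 2 ≤ r) (hcop : Nat.Coprime (k + 1) (r - 1))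
    (t q : ℂ) (ht : IsPrimitiveRoot t (k + 1)) (hq : IsPrimitiveRoot q (r - 1))
    (μ : Fin (k + 1 + d) → ℕ) (hμa : Antitone μ) (hμs : IsSlim r (k + 1 + d) μ)
    (g : MvPolynomial (Fin (k + 1 + d)) ℂ) (hg : HighestPartition (k + 1 + d) g μ)
    (c : ℂ) (hc : c ≠ 0)
    (h : ∀ (σ : Equiv.Perm (Fin (k + 1))) (s : Fin (k + 1) → Fin (r - 1)) (y : Fin d → ℂ),
      eval (Fin.append (fun j => c * t ^ (σ j : ℕ) * q ^ (s j : ℕ)) y) g = 0) : False := by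
  classical
  have hN : 0 < r - 1 := by omega
  unfold IsSlim at hμs
  generalize r - 1 = N at hN hμs hcop hq h
  have ht0 : t ≠ 0 := ht.ne_zero (by omega)
  set E : Fin (k + 1) → ℕ := fun j => μ (Fin.rev (Fin.castAdd d j)) with hE
  set z : Fin (k + 1) → ℤ := fun j => N * ((j : ℕ) : ℤ) - E j with hzd
  have hstep : ∀ j : Fin k, E j.succ < E j.castSucc + N := by
    intro j
    have h1 := hμs.1 (Fin.rev (Fin.castAdd d j.succ)) (by simp [Fin.val_rev]; omega)
    have h2 : (⟨(Fin.rev (Fin.castAdd d j.succ) : ℕ) + 1, by simp [Fin.val_rev]; omega⟩ :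
        Fin (k + 1 + d)) = Fin.rev (Fin.castAdd d j.castSucc) := by
      ext; simp [Fin.val_rev]; omega
    rw [h2] at h1
    simp only [hE]
    omega
  have hz : StrictMono z := by
    rw [Fin.strictMono_iff_lt_succ]
    intro j
    have := hstep j
    simp only [hzd, Fin.val_succ, Fin.val_castSucc]
    push_cast
    have h' : (E j.succ : ℤ) < E j.castSucc + N := by exact_mod_cast this
    linarith
  have hzlow : ∀ j, -(N : ℤ) < z j := by
    intro j
    refine lt_of_lt_of_le ?_ (hz.monotone (Fin.zero_le j))
    have h0 : E 0 < N := hμs.2 (Fin.rev (Fin.castAdd d 0)) (by simp [Fin.val_rev])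
    simp only [hzd, Fin.val_zero]
    push_cast
    omega
  have htot := wheel_total N t q c z E g (fun i => μ (Fin.rev (Fin.natAdd (k + 1) i))) h
  set e0 : Fin (k + 1 + d) →₀ ℕ := Finsupp.equivFunOnFinite.symm (μ ∘ Fin.revPerm) with he0
  have he0c : coeff e0 g ≠ 0 := coeff_top hμa hg Fin.revPerm
  have he0v : ∀ j, e0 j = μ (Fin.rev j) := fun j => by simp [he0]
  have hω : IsPrimitiveRoot (t ^ N) (k + 1) := ht.pow_of_coprime N hcop.symm
  rw [Finset.sum_eq_single_of_mem e0] at htot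
  · rcases mul_eq_zero.1 htot with h0 | h0
    · exact he0c h0
    · rw [wheel_det ht0 hq hN z E _ (fun j => by simp [he0v, hE]) (fun j => ((j : ℕ) : ℤ))
        (fun j => by simp [he0v, hzd, hE])] at h0
      rcases mul_eq_zero.1 h0 with h0 | h0
      · rw [Finset.prod_eq_zero_iff] at h0
        obtain ⟨j, -, hj⟩ := h0
        have : (N : ℂ) ≠ 0 := by exact_mod_cast hN.ne'
        exact mul_ne_zero (pow_ne_zero _ hc) this hj
      · have hv : (Matrix.of fun i j : Fin (k + 1) => ((t ^ N) ^ (i : ℕ)) ^ ((j : ℕ) : ℤ)) =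
            Matrix.vandermonde (fun i : Fin (k + 1) => (t ^ N) ^ (i : ℕ)) := by
          ext i j
          simp [Matrix.vandermonde_apply]
        rw [hv] at h0
        refine Matrix.det_vandermonde_ne_zero_iff.2 ?_ h0
        intro i j hij
        exact Fin.ext (hω.pow_inj i.2 j.2 hij)
  · simp only [Finset.mem_filter, mem_support_iff]
    exact ⟨he0c, fun i => he0v _⟩
  · intro e he hne
    simp only [Finset.mem_filter, mem_support_iff] at he
    by_cases hd : ∀ j : Fin (k + 1), (N : ℤ) ∣ (e (Fin.castAdd d j) : ℤ) - E j
    · have hd' : ∀ j : Fin (k + 1), ∃ p : ℤ, N * p = e (Fin.castAdd d j) + z j := by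
        intro j
        obtain ⟨a, ha⟩ := hd j
        exact ⟨a + (j : ℕ), by simp only [hzd]; linarith⟩
      choose p hp using hd'
      rw [wheel_det ht0 hq hN z E _ hd p hp]
      by_cases hinj : ∀ i j, p i ≡ p j [ZMOD ((k + 1 : ℕ) : ℤ)] → i = j
      · exfalso
        apply hne
        have := comb_core hN hg z hz (fun j => rfl) hzlow e he.1 he.2 p hp hinj
        ext j
        rw [this, he0v]
      · push Not at hinj
        obtain ⟨i, j, hij, hne'⟩ := hinj
        rw [Matrix.det_zero_of_column_eq hne', mul_zero, mul_zero]
        intro l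
        simp only [Matrix.of_apply]
        have hω0 : t ^ N ≠ 0 := pow_ne_zero _ ht0
        have hx0 : (t ^ N) ^ (l : ℕ) ≠ 0 := pow_ne_zero _ hω0
        obtain ⟨a, ha⟩ := hij.symm.dvd
        rw [show p i = p j + ((k + 1 : ℕ) : ℤ) * a by linarith, zpow_add₀ hx0, zpow_mul,
          zpow_natCast, pow_right_comm (t ^ N), hω.pow_eq_one]
        simp
    · push Not at hd
      obtain ⟨j, hj⟩ := hd
      rw [wheel_det_zero_of_not_dvd ht0 hq hN z E _ j hj, mul_zero]

/-- if `μ ∈ π_n` is `(r-1)`-slim, `g` is symmetric with highest partition `μ`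
and `n > k`, then for any `c ≠ 0` there are `s_1,…,s_{k+1} ∈ {0,…,r-2}` such that
`g(c q^{s_1}, c t q^{s_2}, …, c t^k q^{s_{k+1}}, x_{k+2}, …, x_n)` is not identically zero
in the remaining variables. -/
theorem wheel_condition_broken_for_slim_highest_partition
    (k r n : ℕ) (hk : 0 < k) (hr : 2 ≤ r) (hcop : Nat.Coprime (k + 1) (r - 1))
    (t q : ℂ) (ht : IsPrimitiveRoot t (k + 1)) (hq : IsPrimitiveRoot q (r - 1))
    (hn : k < n)
    (μ : Fin n → ℕ) (hμa : Antitone μ) (hμs : IsSlim r n μ)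
    (g : MvPolynomial (Fin n) ℂ) (hg : HighestPartition n g μ)
    (c : ℂ) (hc : c ≠ 0) :
    ∃ s : ℕ → ℕ, (∀ i, s i ≤ r - 2) ∧ ∃ y : Fin n → ℂ,
      MvPolynomial.eval
        (fun j : Fin n =>
          if (j : ℕ) ≤ k then c * t ^ (j : ℕ) * q ^ (s (j : ℕ)) else y j) g ≠ 0 := by
  by_contra hcon
  push Not at hcon
  obtain ⟨d, rfl⟩ : ∃ d, n = k + 1 + d := ⟨n - (k + 1), by omega⟩
  refine wheel_core k r d hr hcop t q ht hq μ hμa hμs g hg c hc fun σ s y => ?_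
  have h1 := hcon (fun i => if hi : i < k + 1 then (s (σ.symm ⟨i, hi⟩) : ℕ) else 0)
    (by
      intro i
      split_ifs with hi
      · have := (s (σ.symm ⟨i, hi⟩)).2
        omega
      · omega) (Fin.append 0 y)
  rw [← eval_comp_of_highest hg _
    (finSumFinEquiv.permCongr (Equiv.sumCongr σ (Equiv.refl (Fin d))))] at h1
  rw [← h1]
  congr 2
  funext j
  refine Fin.addCases (fun j => ?_) (fun j => ?_) j
  · have h2 : ((σ j : Fin (k + 1)) : ℕ) ≤ k := by omega
    have h3 : ((σ j : Fin (k + 1)) : ℕ) < k + 1 := by omega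
    simp [h2, h3]
  · simp
    intro h; omega
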